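/- arXiv:1511.03993 — 2 statements merged into one kernel-verified Lean document; each statement's English description precedes it below -/
import Mathlib

section
/- There exist seven quintuples of real numbers (u0, u1, u2, x2, x3) satisfying g0 = g1 = g2 = g3 = g4 = 0, one in each of the following boxes: (i) 0.30 < u0 < 0.31, 0.23 < u1 < 0.24, 0.11 < u2 < 0.12, 1.003 < x2 < 1.004, 0.278 < x3 < 0.279; (ii) 0.43 < u0 < 0.44, 0.27 < u1 < 0.28, 1.41 < u2 < 1.42, 1.008 < x2 < 1.009, 0.379 < x3 < 0.380; (iii) 0.33 < u0 < 0.34, 0.236 < u1 < 0.237, 0.36 < u2 < 0.37, 0.312 < x2 < 0.313, 1.0008 < x3 < 1.0009; (iv) 0.28 < u0 < 0.29, 0.36 < u1 < 0.37, 0.14 < u2 < 0.15, 0.287 < x2 < 0.288, 1.002 < x3 < 1.003; (v) 0.77 < u0 < 0.78, 0.19 < u1 < 0.20, 0.11 < u2 < 0.12, 0.526 < x2 < 0.527, 1.08 < x3 < 1.09; (vi) 1.58 < u0 < 1.59, 0.30 < u1 < 0.31, 1.32 < u2 < 1.33, 1.23 < x2 < 1.24, 1.35 < x3 < 1.36;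 (vii) 2.38 < u0 < 2.39, 0.30 < u1 < 0.31, 0.17 < u2 < 0.18, 1.62 < x2 < 1.63, 2.22 < x3 < 2.23. (These give seven non-isometric non-naturally reductive left-invariant Einstein metrics on E7 associated to the subgroup SU(5)xSU(3)xU(1).) -/
set_option linter.all false
noncomputable def g0 (u0 u1 u2 x2 x3 : ℝ) : ℝ :=
  4*u0*u1*x2 ^ 2*x3 ^ 2 + 6*u0*u1*x2 ^ 2 + 8*u0*u1*x3 ^ 2 - 9*u1 ^ 2*x2 ^ 2*x3 ^ 2 - u1 ^ 2*x2 ^ 2 - 3*u1 ^ 2*x3 ^ 2 - 5*x2 ^ 2*x3 ^ 2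

noncomputable def g1 (u0 u1 u2 x2 x3 : ℝ) : ℝ :=
  9*u1 ^ 2*u2*x2 ^ 2*x3 ^ 2 + u1 ^ 2*u2*x2 ^ 2 + 3*u1 ^ 2*u2*x3 ^ 2 - 10*u1*u2 ^ 2*x2 ^ 2*x3 ^ 2 - 5*u1*u2 ^ 2*x3 ^ 2 - 3*u1*x2 ^ 2*x3 ^ 2 + 5*u2*x2 ^ 2*x3 ^ 2

noncomputable def g2 (u0 u1 u2 x2 x3 : ℝ) : ℝ :=
  2*u0*u2*x2 ^ 2*x3 + 108*u1*u2*x2 ^ 2*x3 + 190*u2 ^ 2*x2 ^ 2*x3 + 75*u2 ^ 2*x3 + 90*u2*x2 ^ 3*x3 + 30*u2*x2 ^ 3 - 540*u2*x2 ^ 2*x3 + 30*u2*x2*x3 ^ 2 - 30*u2*x2 + 45*x2 ^ 2*x3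

noncomputable def g3 (u0 u1 u2 x2 x3 : ℝ) : ℝ :=
  -u0*x2 ^ 2*x3 + 4*u0*x3 - 54*u1*x2 ^ 2*x3 + 36*u1*x3 - 20*u2*x2 ^ 2*x3 + 20*u2*x3 - 90*x2 ^ 3*x3 - 45*x2 ^ 3 + 270*x2 ^ 2*x3 + 15*x2*x3 ^ 2 - 180*x2*x3 + 45*x2

noncomputable def g4 (u0 u1 u2 x2 x3 : ℝ) : ℝ :=
  9*u0*x2 ^ 2 - 4*u0*x3 ^ 2 + 36*u1*x2 ^ 2 - 36*u1*x3 ^ 2 - 20*u2*x3 ^ 2 + 45*x2 ^ 3*x3 ^ 2 + 120*x2 ^ 3*x3 - 270*x2 ^ 2*x3 - 120*x2*x3 ^ 3 + 180*x2*x3 ^ 2 + 60*x2*x3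

noncomputable def GG (x : Fin 5 → ℝ) : Fin 5 → ℝ :=
  ![g0 (x 0) (x 1) (x 2) (x 3) (x 4), g1 (x 0) (x 1) (x 2) (x 3) (x 4), g2 (x 0) (x 1) (x 2) (x 3) (x 4),
    g3 (x 0) (x 1) (x 2) (x 3) (x 4), g4 (x 0) (x 1) (x 2) (x 3) (x 4)]

noncomputable def JJ (c : Fin 5 → ℝ) : Fin 5 → Fin 5 → ℝ :=
  ![![(4)*(c 1)*(c 3)^2*(c 4)^2 + (6)*(c 1)*(c 3)^2 + (8)*(c 1)*(c 4)^2,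
      (4)*(c 0)*(c 3)^2*(c 4)^2 + (6)*(c 0)*(c 3)^2 + (8)*(c 0)*(c 4)^2 + (-18)*(c 1)*(c 3)^2*(c 4)^2 + (-2)*(c 1)*(c 3)^2 + (-6)*(c 1)*(c 4)^2,
      0,
      (8)*(c 0)*(c 1)*(c 3)*(c 4)^2 + (12)*(c 0)*(c 1)*(c 3) + (-18)*(c 1)^2*(c 3)*(c 4)^2 + (-2)*(c 1)^2*(c 3) + (-10)*(c 3)*(c 4)^2,
      (8)*(c 0)*(c 1)*(c 3)^2*(c 4) + (16)*(c 0)*(c 1)*(c 4) + (-18)*(c 1)^2*(c 3)^2*(c 4) + (-6)*(c 1)^2*(c 4) + (-10)*(c 3)^2*(c 4)],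
    ![0,
      (18)*(c 1)*(c 2)*(c 3)^2*(c 4)^2 + (2)*(c 1)*(c 2)*(c 3)^2 + (6)*(c 1)*(c 2)*(c 4)^2 + (-10)*(c 2)^2*(c 3)^2*(c 4)^2 + (-5)*(c 2)^2*(c 4)^2 + (-3)*(c 3)^2*(c 4)^2,
      (9)*(c 1)^2*(c 3)^2*(c 4)^2 + (1)*(c 1)^2*(c 3)^2 + (3)*(c 1)^2*(c 4)^2 + (-20)*(c 1)*(c 2)*(c 3)^2*(c 4)^2 + (-10)*(c 1)*(c 2)*(c 4)^2 + (5)*(c 3)^2*(c 4)^2,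
      (18)*(c 1)^2*(c 2)*(c 3)*(c 4)^2 + (2)*(c 1)^2*(c 2)*(c 3) + (-20)*(c 1)*(c 2)^2*(c 3)*(c 4)^2 + (-6)*(c 1)*(c 3)*(c 4)^2 + (10)*(c 2)*(c 3)*(c 4)^2,
      (18)*(c 1)^2*(c 2)*(c 3)^2*(c 4) + (6)*(c 1)^2*(c 2)*(c 4) + (-20)*(c 1)*(c 2)^2*(c 3)^2*(c 4) + (-10)*(c 1)*(c 2)^2*(c 4) + (-6)*(c 1)*(c 3)^2*(c 4) + (10)*(c 2)*(c 3)^2*(c 4)],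
    ![(2)*(c 2)*(c 3)^2*(c 4),
      (108)*(c 2)*(c 3)^2*(c 4),
      (2)*(c 0)*(c 3)^2*(c 4) + (108)*(c 1)*(c 3)^2*(c 4) + (380)*(c 2)*(c 3)^2*(c 4) + (150)*(c 2)*(c 4) + (90)*(c 3)^3*(c 4) + (30)*(c 3)^3 + (-540)*(c 3)^2*(c 4) + (30)*(c 3)*(c 4)^2 + (-30)*(c 3),
      (4)*(c 0)*(c 2)*(c 3)*(c 4) + (216)*(c 1)*(c 2)*(c 3)*(c 4) + (380)*(c 2)^2*(c 3)*(c 4) + (270)*(c 2)*(c 3)^2*(c 4) + (90)*(c 2)*(c 3)^2 + (-1080)*(c 2)*(c 3)*(c 4) + (30)*(c 2)*(c 4)^2 + (-30)*(c 2) + (90)*(c 3)*(c 4),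
      (2)*(c 0)*(c 2)*(c 3)^2 + (108)*(c 1)*(c 2)*(c 3)^2 + (190)*(c 2)^2*(c 3)^2 + (75)*(c 2)^2 + (90)*(c 2)*(c 3)^3 + (-540)*(c 2)*(c 3)^2 + (60)*(c 2)*(c 3)*(c 4) + (45)*(c 3)^2],
    ![(-1)*(c 3)^2*(c 4) + (4)*(c 4),
      (-54)*(c 3)^2*(c 4) + (36)*(c 4),
      (-20)*(c 3)^2*(c 4) + (20)*(c 4),
      (-2)*(c 0)*(c 3)*(c 4) + (-108)*(c 1)*(c 3)*(c 4) + (-40)*(c 2)*(c 3)*(c 4) + (-270)*(c 3)^2*(c 4) + (-135)*(c 3)^2 + (540)*(c 3)*(c 4) + (15)*(c 4)^2 + (-180)*(c 4) + (45),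
      (-1)*(c 0)*(c 3)^2 + (4)*(c 0) + (-54)*(c 1)*(c 3)^2 + (36)*(c 1) + (-20)*(c 2)*(c 3)^2 + (20)*(c 2) + (-90)*(c 3)^3 + (270)*(c 3)^2 + (30)*(c 3)*(c 4) + (-180)*(c 3)],
    ![(9)*(c 3)^2 + (-4)*(c 4)^2,
      (36)*(c 3)^2 + (-36)*(c 4)^2,
      (-20)*(c 4)^2,
      (18)*(c 0)*(c 3) + (72)*(c 1)*(c 3) + (135)*(c 3)^2*(c 4)^2 + (360)*(c 3)^2*(c 4) + (-540)*(c 3)*(c 4) + (-120)*(c 4)^3 + (180)*(c 4)^2 + (60)*(c 4),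
      (-8)*(c 0)*(c 4) + (-72)*(c 1)*(c 4) + (-40)*(c 2)*(c 4) + (90)*(c 3)^3*(c 4) + (120)*(c 3)^3 + (-270)*(c 3)^2 + (-360)*(c 3)*(c 4)^2 + (360)*(c 3)*(c 4) + (60)*(c 3)]]

def QQ (c : Fin 5 → ℝ) (r : ℝ) (f : (Fin 5 → ℝ) → ℝ) (l : Fin 5 → ℝ) (M : ℝ) : Prop :=
  0 ≤ M ∧ (∀ h : Fin 5 → ℝ, |∑ j, l j * h j| ≤ M * ‖h‖) ∧
  ∀ x y, ‖x - c‖ ≤ r → ‖y - c‖ ≤ r → |f x| ≤ M ∧ |f x - f y| ≤ M * ‖x - y‖ ∧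
    |f x - f y - ∑ j, l j * (x - y) j| ≤ M * r * ‖x - y‖

lemma QQ.add {c : Fin 5 → ℝ} {r : ℝ} {f g : (Fin 5 → ℝ) → ℝ} {l m : Fin 5 → ℝ} {M N : ℝ}
    (hf : QQ c r f l M) (hg : QQ c r g m N) :
    QQ c r (fun x => f x + g x) (fun j => l j + m j) (M + N) := by
  obtain ⟨a1, a2, a3⟩ := hf
  obtain ⟨b1, b2, b3⟩ := hg
  refine ⟨by positivity, fun h => ?_, fun x y hx hy => ?_⟩
  · have e : ∑ j, (l j + m j) * h j = ∑ j, l j * h j + ∑ j, m j * h j := by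
      rw [← Finset.sum_add_distrib]; exact Finset.sum_congr rfl fun j _ => by ring
    rw [e]
    have := abs_add_le (∑ j, l j * h j) (∑ j, m j * h j)
    linarith [a2 h, b2 h]
  · obtain ⟨p1, p2, p3⟩ := a3 x y hx hy
    obtain ⟨q1, q2, q3⟩ := b3 x y hx hy
    have e : ∑ j, (l j + m j) * (x - y) j = ∑ j, l j * (x - y) j + ∑ j, m j * (x - y) j := by
      rw [← Finset.sum_add_distrib]; exact Finset.sum_congr rfl fun j _ => by ring
    refine ⟨?_, ?_, ?_⟩
    · have := abs_add_le (f x) (g x)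
      linarith
    · have := abs_add_le (f x - f y) (g x - g y)
      have e2 : f x + g x - (f y + g y) = (f x - f y) + (g x - g y) := by ring
      simp only [e2]; linarith
    · have := abs_add_le (f x - f y - ∑ j, l j * (x - y) j) (g x - g y - ∑ j, m j * (x - y) j)
      have e2 : f x + g x - (f y + g y) - ∑ j, (l j + m j) * (x - y) j
        = (f x - f y - ∑ j, l j * (x - y) j) + (g x - g y - ∑ j, m j * (x - y) j) := by
        rw [e]; ring
      simp only [e2]; linarith

lemma QQ.smul {c : Fin 5 → ℝ} {r : ℝ} {f : (Fin 5 → ℝ) → ℝ} {l : Fin 5 → ℝ} {M : ℝ}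
    (hf : QQ c r f l M) (a : ℝ) :
    QQ c r (fun x => a * f x) (fun j => a * l j) (|a| * M) := by
  obtain ⟨a1, a2, a3⟩ := hf
  refine ⟨by positivity, fun h => ?_, fun x y hx hy => ?_⟩
  · have e : ∑ j, (a * l j) * h j = a * ∑ j, l j * h j := by
      rw [Finset.mul_sum]; exact Finset.sum_congr rfl fun j _ => by ring
    rw [e, abs_mul, mul_assoc]
    exact mul_le_mul_of_nonneg_left (a2 h) (abs_nonneg a)
  · obtain ⟨p1, p2, p3⟩ := a3 x y hx hy
    have e : ∑ j, (a * l j) * (x - y) j = a * ∑ j, l j * (x - y) j := by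
      rw [Finset.mul_sum]; exact Finset.sum_congr rfl fun j _ => by ring
    refine ⟨?_, ?_, ?_⟩
    · rw [abs_mul]
      exact mul_le_mul_of_nonneg_left p1 (abs_nonneg a)
    · rw [← mul_sub, abs_mul, mul_assoc]
      exact mul_le_mul_of_nonneg_left p2 (abs_nonneg a)
    · rw [e, ← mul_sub, ← mul_sub, abs_mul, mul_assoc, mul_assoc]
      rw [mul_assoc] at p3
      exact mul_le_mul_of_nonneg_left p3 (abs_nonneg a)

lemma QQ.mul {c : Fin 5 → ℝ} {r : ℝ} {f g : (Fin 5 → ℝ) → ℝ} {l m : Fin 5 → ℝ} {M N : ℝ}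
    (hf : QQ c r f l M) (hr : 0 ≤ r) (hg : QQ c r g m N) :
    QQ c r (fun x => f x * g x) (fun j => f c * m j + g c * l j) (4 * (M * N)) := by
  obtain ⟨a1, a2, a3⟩ := hf
  obtain ⟨b1, b2, b3⟩ := hg
  have hcc : ‖c - c‖ ≤ r := by simpa using hr
  have fc := (a3 c c hcc hcc).1
  have gc := (b3 c c hcc hcc).1
  have hMN : 0 ≤ M * N := by positivity
  have E : ∀ h : Fin 5 → ℝ, ∑ j, (f c * m j + g c * l j) * h j
      = f c * ∑ j, m j * h j + g c * ∑ j, l j * h j := by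
    intro h
    rw [Finset.mul_sum, Finset.mul_sum, ← Finset.sum_add_distrib]
    exact Finset.sum_congr rfl fun j _ => by ring
  have key : ∀ {a b A B : ℝ}, |a| ≤ A → |b| ≤ B → |a * b| ≤ A * B := by
    intro a b A B h1 h2
    rw [abs_mul]
    exact mul_le_mul h1 h2 (abs_nonneg b) ((abs_nonneg a).trans h1)
  refine ⟨by positivity, fun h => ?_, fun x y hx hy => ?_⟩
  · rw [E]
    have := abs_add_le (f c * ∑ j, m j * h j) (g c * ∑ j, l j * h j)
    have k1 := key fc (b2 h)
    have k2 := key gc (a2 h)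
    have : 0 ≤ M * N * ‖h‖ := by positivity
    nlinarith
  · obtain ⟨p1, p2, p3⟩ := a3 x y hx hy
    obtain ⟨q1, q2, q3⟩ := b3 x y hx hy
    have gy := (b3 y y hy hy).1
    have fxc : |f x - f c| ≤ M * r :=
      (a3 x c hx hcc).2.1.trans (mul_le_mul_of_nonneg_left hx a1)
    have gyc : |g y - g c| ≤ N * r :=
      (b3 y c hy hcc).2.1.trans (mul_le_mul_of_nonneg_left hy b1)
    have n0 := norm_nonneg (x - y)
    have hp : 0 ≤ M * N * ‖x - y‖ := by positivity
    refine ⟨?_, ?_, ?_⟩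
    · have := key p1 q1
      show |f x * g x| ≤ _
      linarith
    · have e2 : f x * g x - f y * g y = f x * (g x - g y) + g y * (f x - f y) := by ring
      show |f x * g x - f y * g y| ≤ _
      rw [e2]
      have := abs_add_le (f x * (g x - g y)) (g y * (f x - f y))
      have k1 := key p1 q2
      have k2 := key gy p2
      nlinarith
    · show |f x * g x - f y * g y - _| ≤ _
      rw [E]
      have k1 := key p1 q3
      have k2 := key fxc (b2 (x - y))
      have k3 := key gy p3
      have k4 := key gyc (a2 (x - y))
      set S := ∑ j, l j * (x - y) j
      set T := ∑ j, m j * (x - y) j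
      have e2 : f x * g x - f y * g y - (f c * T + g c * S)
        = (f x * (g x - g y - T) + (f x - f c) * T) + (g y * (f x - f y - S) + (g y - g c) * S) := by
        ring
      rw [e2]
      have h1 := abs_add_le (f x * (g x - g y - T) + (f x - f c) * T)
        (g y * (f x - f y - S) + (g y - g c) * S)
      have h2 := abs_add_le (f x * (g x - g y - T)) ((f x - f c) * T)
      have h3 := abs_add_le (g y * (f x - f y - S)) ((g y - g c) * S)
      linarith

lemma QQ.var {c : Fin 5 → ℝ} {r : ℝ} (hr1 : r ≤ 1) (hc : ∀ i, |c i| ≤ 3) (i : Fin 5) :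
    QQ c r (fun x => x i) (fun j => if i = j then 1 else 0) 4 := by
  have n : ∀ h : Fin 5 → ℝ, |h i| ≤ ‖h‖ := fun h => norm_le_pi_norm h i
  refine ⟨by norm_num, fun h => ?_, fun x y hx hy => ⟨?_, ?_, ?_⟩⟩
  · simp only [ite_mul, one_mul, zero_mul, Finset.sum_ite_eq, Finset.mem_univ, if_true]
    linarith [n h, norm_nonneg h]
  · have h1 := n (x - c)
    have h2 : |x i| ≤ |x i - c i| + |c i| := by
      have := abs_add_le (x i - c i) (c i)
      simpa using this
    have h3 : |x i - c i| ≤ ‖x - c‖ := h1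
    show |x i| ≤ 4
    linarith [hc i]
  · have : |x i - y i| ≤ ‖x - y‖ := n (x - y)
    show |x i - y i| ≤ _
    linarith [norm_nonneg (x - y)]
  · simp only [ite_mul, one_mul, zero_mul, Finset.sum_ite_eq, Finset.mem_univ, if_true]
    have h0 : 0 ≤ r := (norm_nonneg _).trans hx
    simp only [Pi.sub_apply, sub_self, abs_zero]
    positivity

lemma QQ.conv {c : Fin 5 → ℝ} {r : ℝ} {f g : (Fin 5 → ℝ) → ℝ} {l m : Fin 5 → ℝ} {M N : ℝ}
    (hf : QQ c r f l M) (hr : 0 ≤ r) (h1 : ∀ x, f x = g x) (h2 : ∀ j, l j = m j) (h3 : M ≤ N) :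
    QQ c r g m N := by
  obtain rfl : f = g := funext h1
  obtain rfl : l = m := funext h2
  obtain ⟨a1, a2, a3⟩ := hf
  refine ⟨a1.trans h3, fun h => (a2 h).trans (by gcongr), fun x y hx hy => ?_⟩
  obtain ⟨p1, p2, p3⟩ := a3 x y hx hy
  exact ⟨p1.trans h3, p2.trans (by gcongr), p3.trans (by gcongr)⟩

lemma QQ_g0 {c : Fin 5 → ℝ} {r : ℝ} (hr : 0 ≤ r) (hr1 : r ≤ 1) (hc : ∀ i, |c i| ≤ 3) :
    QQ c r (fun x => GG x 0) (JJ c 0) 10000000000 := by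
  have v := QQ.var hr1 hc
  refine QQ.conv (((((((((((((v 0).mul hr (v 1)).mul hr (v 3)).mul hr (v 3)).mul hr (v 4)).mul hr (v 4)).smul (4)).add (((((v 0).mul hr (v 1)).mul hr (v 3)).mul hr (v 3)).smul (6))).add (((((v 0).mul hr (v 1)).mul hr (v 4)).mul hr (v 4)).smul (8))).add (((((((v 1).mul hr (v 1)).mul hr (v 3)).mul hr (v 3)).mul hr (v 4)).mul hr (v 4)).smul (-9))).add (((((v 1).mul hr (v 1)).mul hr (v 3)).mul hr (v 3)).smul (-1))).add (((((v 1).mul hr (v 1)).mul hr (v 4)).mul hr (v 4)).smul (-3))).add (((((v 3).mul hr (v 3)).mul hr (v 4)).mul hr (v 4)).smul (-5))) hr (fun x => ?_) (fun j => ?_) ?_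
  · simp [GG, g0]
    ring
  · fin_cases j <;> simp [JJ] <;> try ring
  · norm_num [abs_of_nonneg, abs_of_nonpos]

lemma QQ_g1 {c : Fin 5 → ℝ} {r : ℝ} (hr : 0 ≤ r) (hr1 : r ≤ 1) (hc : ∀ i, |c i| ≤ 3) :
    QQ c r (fun x => GG x 1) (JJ c 1) 10000000000 := by
  have v := QQ.var hr1 hc
  refine QQ.conv ((((((((((((((v 1).mul hr (v 1)).mul hr (v 2)).mul hr (v 3)).mul hr (v 3)).mul hr (v 4)).mul hr (v 4)).smul (9)).add ((((((v 1).mul hr (v 1)).mul hr (v 2)).mul hr (v 3)).mul hr (v 3)).smul (1))).add ((((((v 1).mul hr (v 1)).mul hr (v 2)).mul hr (v 4)).mul hr (v 4)).smul (3))).add ((((((((v 1).mul hr (v 2)).mul hr (v 2)).mul hr (v 3)).mul hr (v 3)).mul hr (v 4)).mul hr (v 4)).smul (-10))).add ((((((v 1).mul hr (v 2)).mul hr (v 2)).mul hr (v 4)).mul hr (v 4)).smul (-5))).add ((((((v 1).mul hr (v 3)).mul hr (v 3)).mul hr (v 4)).mul hr (v 4)).smul (-3))).add ((((((v 2).mul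 hr (v 3)).mul hr (v 3)).mul hr (v 4)).mul hr (v 4)).smul (5))) hr (fun x => ?_) (fun j => ?_) ?_
  · simp [GG, g1]
    ring
  · fin_cases j <;> simp [JJ] <;> try ring
  · norm_num [abs_of_nonneg, abs_of_nonpos]

lemma QQ_g2 {c : Fin 5 → ℝ} {r : ℝ} (hr : 0 ≤ r) (hr1 : r ≤ 1) (hc : ∀ i, |c i| ≤ 3) :
    QQ c r (fun x => GG x 2) (JJ c 2) 10000000000 := by
  have v := QQ.var hr1 hc
  refine QQ.conv (((((((((((((((v 0).mul hr (v 2)).mul hr (v 3)).mul hr (v 3)).mul hr (v 4)).smul (2)).add ((((((v 1).mul hr (v 2)).mul hr (v 3)).mul hr (v 3)).mul hr (v 4)).smul (108))).add ((((((v 2).mul hr (v 2)).mul hr (v 3)).mul hr (v 3)).mul hr (v 4)).smul (190))).add ((((v 2).mul hr (v 2)).mul hr (v 4)).smul (75))).add ((((((v 2).mul hr (v 3)).mul hr (v 3)).mul hr (v 3)).mul hr (v 4)).smul (90))).add (((((v 2).mul hr (v 3)).mul hr (v 3)).mul hr (v 3)).smul (30))).add (((((v 2).mul hr (v 3)).mul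 hr (v 3)).mul hr (v 4)).smul (-540))).add (((((v 2).mul hr (v 3)).mul hr (v 4)).mul hr (v 4)).smul (30))).add (((v 2).mul hr (v 3)).smul (-30))).add ((((v 3).mul hr (v 3)).mul hr (v 4)).smul (45))) hr (fun x => ?_) (fun j => ?_) ?_
  · simp [GG, g2]
    ring
  · fin_cases j <;> simp [JJ] <;> try ring
  · norm_num [abs_of_nonneg, abs_of_nonpos]

lemma QQ_g3 {c : Fin 5 → ℝ} {r : ℝ} (hr : 0 ≤ r) (hr1 : r ≤ 1) (hc : ∀ i, |c i| ≤ 3) :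
    QQ c r (fun x => GG x 3) (JJ c 3) 10000000000 := by
  have v := QQ.var hr1 hc
  refine QQ.conv ((((((((((((((((v 0).mul hr (v 3)).mul hr (v 3)).mul hr (v 4)).smul (-1)).add (((v 0).mul hr (v 4)).smul (4))).add (((((v 1).mul hr (v 3)).mul hr (v 3)).mul hr (v 4)).smul (-54))).add (((v 1).mul hr (v 4)).smul (36))).add (((((v 2).mul hr (v 3)).mul hr (v 3)).mul hr (v 4)).smul (-20))).add (((v 2).mul hr (v 4)).smul (20))).add (((((v 3).mul hr (v 3)).mul hr (v 3)).mul hr (v 4)).smul (-90))).add ((((v 3).mul hr (v 3)).mul hr (v 3)).smul (-45))).add ((((v 3).mul hr (v 3)).mul hr (v 4)).smul (270))).add ((((v 3).mul hr (v 4)).mul hr (v 4)).smul (15))).add (((v 3).mul hr (v 4)).smul (-180))).add ((v 3).smul (45))) hr (fun x => ?_) (fun j => ?_) ?_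
  · simp [GG, g3]
    ring
  · fin_cases j <;> simp [JJ] <;> try ring
  · norm_num [abs_of_nonneg, abs_of_nonpos]

lemma QQ_g4 {c : Fin 5 → ℝ} {r : ℝ} (hr : 0 ≤ r) (hr1 : r ≤ 1) (hc : ∀ i, |c i| ≤ 3) :
    QQ c r (fun x => GG x 4) (JJ c 4) 10000000000 := by
  have v := QQ.var hr1 hc
  refine QQ.conv ((((((((((((((v 0).mul hr (v 3)).mul hr (v 3)).smul (9)).add ((((v 0).mul hr (v 4)).mul hr (v 4)).smul (-4))).add ((((v 1).mul hr (v 3)).mul hr (v 3)).smul (36))).add ((((v 1).mul hr (v 4)).mul hr (v 4)).smul (-36))).add ((((v 2).mul hr (v 4)).mul hr (v 4)).smul (-20))).add ((((((v 3).mul hr (v 3)).mul hr (v 3)).mul hr (v 4)).mul hr (v 4)).smul (45))).add (((((v 3).mul hr (v 3)).mul hr (v 3)).mul hr (v 4)).smul (120))).add ((((v 3).mul hr (v 3)).mul hr (v 4)).smul (-270))).add (((((v 3).mul hr (v 4)).mul hr (v 4)).mul hr (v 4)).smul (-120))).add ((((v 3).mul hr (v 4)).mul hr (v 4)).smul (180))).add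 (((v 3).mul hr (v 4)).smul (60))) hr (fun x => ?_) (fun j => ?_) ?_
  · simp [GG, g4]
    ring
  · fin_cases j <;> simp [JJ] <;> try ring
  · norm_num [abs_of_nonneg, abs_of_nonpos]

lemma QQ_all {c : Fin 5 → ℝ} {r : ℝ} (hr : 0 ≤ r) (hr1 : r ≤ 1) (hc : ∀ i, |c i| ≤ 3) (k : Fin 5) :
    QQ c r (fun x => GG x k) (JJ c k) 10000000000 := by
  fin_cases k
  · exact QQ_g0 hr hr1 hc
  · exact QQ_g1 hr hr1 hc
  · exact QQ_g2 hr hr1 hc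
  · exact QQ_g3 hr hr1 hc
  · exact QQ_g4 hr hr1 hc

lemma main_exists (c : Fin 5 → ℝ) (A : Fin 5 → Fin 5 → ℝ) (hc : ∀ i, |c i| ≤ 3)
    (hA : ∀ i k, |A i k| ≤ 100)
    (hJ : ∀ i, ∑ j, |(if i = j then 1 else 0) - ∑ k, A i k * JJ c k j| ≤ 1 / 4)
    (hG : ∀ i, |∑ k, A i k * GG c k| ≤ 1 / 10 ^ 15) :
    ∃ x : Fin 5 → ℝ, (∀ i, |x i - c i| ≤ 1 / 10 ^ 14) ∧ ∀ k, GG x k = 0 := by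
  obtain ⟨r, hrdef⟩ : ∃ r : ℝ, r = 1 / 10 ^ 14 := ⟨_, rfl⟩
  rw [← hrdef]
  have hr : 0 ≤ r := by rw [hrdef]; positivity
  have hr1 : r ≤ 1 := by rw [hrdef]; norm_num
  have Q := QQ_all hr hr1 hc
  let T : (Fin 5 → ℝ) → (Fin 5 → ℝ) := fun x i => x i - ∑ k, A i k * GG x k
  have hlip : ∀ x y, ‖x - c‖ ≤ r → ‖y - c‖ ≤ r → ‖T x - T y‖ ≤ 1 / 2 * ‖x - y‖ := by
    intro x y hx hy
    rw [pi_norm_le_iff_of_nonneg (by positivity)]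
    intro i
    have e : (T x - T y) i = ∑ j, ((if i = j then 1 else 0) - ∑ k, A i k * JJ c k j) * (x - y) j
        - ∑ k, A i k * (GG x k - GG y k - ∑ j, JJ c k j * (x - y) j) := by
      simp only [T, Pi.sub_apply, sub_mul, ite_mul, one_mul, zero_mul, Finset.sum_sub_distrib,
        Finset.sum_ite_eq, Finset.mem_univ, if_true, mul_sub, Finset.mul_sum, Finset.sum_mul]
      rw [Finset.sum_comm (f := fun j k => A i k * JJ c k j * x j),
        Finset.sum_comm (f := fun j k => A i k * JJ c k j * y j)]
      simp only [mul_assoc]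
      ring
    rw [e, Real.norm_eq_abs]
    have b1 : |∑ j, ((if i = j then 1 else 0) - ∑ k, A i k * JJ c k j) * (x - y) j|
        ≤ 1 / 4 * ‖x - y‖ := by
      refine (Finset.abs_sum_le_sum_abs _ _).trans ?_
      refine le_trans ?_ (mul_le_mul_of_nonneg_right (hJ i) (norm_nonneg _))
      rw [Finset.sum_mul]
      refine Finset.sum_le_sum fun j _ => ?_
      rw [abs_mul]
      exact mul_le_mul_of_nonneg_left (norm_le_pi_norm (x - y) j) (abs_nonneg _)
    have b2 : |∑ k, A i k * (GG x k - GG y k - ∑ j, JJ c k j * (x - y) j)|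
        ≤ ∑ k : Fin 5, 100 * (10000000000 * r * ‖x - y‖) := by
      refine (Finset.abs_sum_le_sum_abs _ _).trans ?_
      refine Finset.sum_le_sum fun k _ => ?_
      rw [abs_mul]
      exact mul_le_mul (hA i k) ((Q k).2.2 x y hx hy).2.2 (abs_nonneg _) (by norm_num)
    simp only [Finset.sum_const, Finset.card_univ, Fintype.card_fin, nsmul_eq_mul] at b2
    have := abs_sub (∑ j, ((if i = j then 1 else 0) - ∑ k, A i k * JJ c k j) * (x - y) j)
      (∑ k, A i k * (GG x k - GG y k - ∑ j, JJ c k j * (x - y) j))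
    have n0 := norm_nonneg (x - y)
    have b3 : ((5 : ℕ) : ℝ) * (100 * (10000000000 * r * ‖x - y‖)) = 1 / 20 * ‖x - y‖ := by
      rw [hrdef]; push_cast; ring
    rw [b3] at b2
    linarith
  have hTc : ‖T c - c‖ ≤ r / 10 := by
    rw [pi_norm_le_iff_of_nonneg (by positivity)]
    intro i
    have : (T c - c) i = - ∑ k, A i k * GG c k := by simp [T]
    rw [this, Real.norm_eq_abs, abs_neg]
    refine (hG i).trans ?_
    rw [hrdef]; norm_num
  have hmaps : Set.MapsTo T (Metric.closedBall c r) (Metric.closedBall c r) := by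
    intro x hx
    rw [mem_closedBall_iff_norm] at hx ⊢
    have h1 := hlip x c hx (by simpa using hr)
    have h2 : T x - c = (T x - T c) + (T c - c) := by abel
    rw [h2]
    have := norm_add_le (T x - T c) (T c - c)
    linarith
  have hcon : ContractingWith (1 / 2) (hmaps.restrict T _ _) := by
    refine ⟨by rw [← NNReal.coe_lt_coe]; norm_num, LipschitzWith.of_dist_le_mul fun x y => ?_⟩
    have := hlip x y (mem_closedBall_iff_norm.1 x.2) (mem_closedBall_iff_norm.1 y.2)
    rw [Subtype.dist_eq, Subtype.dist_eq, dist_eq_norm, dist_eq_norm]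
    simpa using this
  obtain ⟨x, hx, hfix, -⟩ := hcon.exists_fixedPoint' Metric.isClosed_closedBall.isComplete hmaps
    (Metric.mem_closedBall_self hr) (edist_ne_top _ _)
  refine ⟨x, fun i => ?_, ?_⟩
  · exact (norm_le_pi_norm (x - c) i).trans (mem_closedBall_iff_norm.1 hx)
  · have hz : Matrix.mulVec (Matrix.of A) (GG x) = 0 := by
      funext i
      have := congrFun hfix i
      simp only [T] at this
      simp only [Matrix.mulVec, dotProduct, Matrix.of_apply, Pi.zero_apply]
      linarith
    have hdet : (Matrix.of A * Matrix.of (JJ c)).det ≠ 0 := by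
      apply det_ne_zero_of_sum_row_lt_diag
      intro i
      have h := hJ i
      rw [← Finset.add_sum_erase _ _ (Finset.mem_univ i)] at h
      have e : ∑ j ∈ Finset.univ.erase i, |(if i = j then (1 : ℝ) else 0) - ∑ k, A i k * JJ c k j|
          = ∑ j ∈ Finset.univ.erase i, ‖(Matrix.of A * Matrix.of (JJ c)) i j‖ := by
        refine Finset.sum_congr rfl fun j hj => ?_
        rw [if_neg (Finset.ne_of_mem_erase hj).symm, zero_sub, abs_neg]
        rfl
      rw [e, if_pos rfl] at h
      have e2 : ‖(Matrix.of A * Matrix.of (JJ c)) i i‖ = |∑ k, A i k * JJ c k i| := rfl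
      rw [e2]
      have h3 := abs_le.1 ((le_add_of_nonneg_right
        (Finset.sum_nonneg fun j _ => norm_nonneg _)).trans h)
      have h4 := le_abs_self (∑ k, A i k * JJ c k i)
      have h5 := abs_nonneg (1 - ∑ k, A i k * JJ c k i)
      linarith [h3.2]
    rw [Matrix.det_mul] at hdet
    have := Matrix.eq_zero_of_mulVec_eq_zero (left_ne_zero_of_mul hdet) hz
    intro k
    rw [this]; rfl

lemma box0 : ∃ u0 u1 u2 x2 x3 : ℝ,
      0.30 < u0 ∧ u0 < 0.31 ∧ 0.23 < u1 ∧ u1 < 0.24 ∧ 0.11 < u2 ∧ u2 < 0.12 ∧ 1.003 < x2 ∧ x2 < 1.004 ∧ 0.278 < x3 ∧ x3 < 0.279 ∧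
      g0 u0 u1 u2 x2 x3 = 0 ∧ g1 u0 u1 u2 x2 x3 = 0 ∧ g2 u0 u1 u2 x2 x3 = 0 ∧ g3 u0 u1 u2 x2 x3 = 0 ∧ g4 u0 u1 u2 x2 x3 = 0 := by
  obtain ⟨x, hx, hz⟩ := main_exists ![(3058767976359710121981 / 10 ^ 22), (2316204289913034885502 / 10 ^ 22), (1171929469184052061842 / 10 ^ 22), (10035306881968752208400 / 10 ^ 22), (2782797117057979848290 / 10 ^ 22)]
    ![![(-543659 / 10 ^ 6), (46324315 / 10 ^ 6), (198425 / 10 ^ 6), (56028 / 10 ^ 6), (207733 / 10 ^ 6)],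
      ![(177765 / 10 ^ 6), (-13638185 / 10 ^ 6), (-58888 / 10 ^ 6), (-12099 / 10 ^ 6), (-31209 / 10 ^ 6)],
      ![(-5421 / 10 ^ 6), (18104 / 10 ^ 6), (-10048 / 10 ^ 6), (-1078 / 10 ^ 6), (1178 / 10 ^ 6)],
      ![(-63471 / 10 ^ 6), (3047260 / 10 ^ 6), (13075 / 10 ^ 6), (-10109 / 10 ^ 6), (12576 / 10 ^ 6)],
      ![(-615555 / 10 ^ 6), (21503121 / 10 ^ 6), (91890 / 10 ^ 6), (28346 / 10 ^ 6), (110198 / 10 ^ 6)]]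
    (by
      intro i
      fin_cases i <;>
        simp only [Fin.isValue, Fin.zero_eta, Fin.mk_one, Fin.reduceFinMk, Matrix.cons_val, Matrix.cons_val_zero, Matrix.cons_val_one] <;>
        exact abs_le.2 ⟨by norm_num, by norm_num⟩)
    (by
      intro i k
      fin_cases i <;> fin_cases k <;>
        simp only [Fin.isValue, Fin.zero_eta, Fin.mk_one, Fin.reduceFinMk, Matrix.cons_val, Matrix.cons_val_zero, Matrix.cons_val_one] <;>
        exact abs_le.2 ⟨by norm_num, by norm_num⟩)
    (by
      intro i
      fin_cases i <;> simp only [Fin.isValue, Fin.zero_eta, Fin.mk_one, Fin.reduceFinMk, Matrix.cons_val, Matrix.cons_val_zero, Matrix.cons_val_one, Fin.sum_univ_five, JJ, Fin.reduceEq, if_true, if_false] <;>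
        norm_num [abs_of_nonneg, abs_of_nonpos])
    (by
      intro i
      fin_cases i <;> simp only [Fin.isValue, Fin.zero_eta, Fin.mk_one, Fin.reduceFinMk, Matrix.cons_val, Matrix.cons_val_zero, Matrix.cons_val_one, Fin.sum_univ_five, GG, g0, g1, g2, g3, g4] <;>
        exact abs_le.2 ⟨by norm_num, by norm_num⟩)
  have h0 := abs_le.1 (hx 0)
  have h1 := abs_le.1 (hx 1)
  have h2 := abs_le.1 (hx 2)
  have h3 := abs_le.1 (hx 3)
  have h4 := abs_le.1 (hx 4)
  simp at h0 h1 h2 h3 h4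
  refine ⟨x 0, x 1, x 2, x 3, x 4, ?_, ?_, ?_, ?_, ?_, ?_, ?_, ?_, ?_, ?_,
    hz 0, hz 1, hz 2, hz 3, hz 4⟩ <;> norm_num <;> linarith

lemma box1 : ∃ u0 u1 u2 x2 x3 : ℝ,
      0.43 < u0 ∧ u0 < 0.44 ∧ 0.27 < u1 ∧ u1 < 0.28 ∧ 1.41 < u2 ∧ u2 < 1.42 ∧ 1.008 < x2 ∧ x2 < 1.009 ∧ 0.379 < x3 ∧ x3 < 0.380 ∧
      g0 u0 u1 u2 x2 x3 = 0 ∧ g1 u0 u1 u2 x2 x3 = 0 ∧ g2 u0 u1 u2 x2 x3 = 0 ∧ g3 u0 u1 u2 x2 x3 = 0 ∧ g4 u0 u1 u2 x2 x3 = 0 := by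
  obtain ⟨x, hx, hz⟩ := main_exists ![(4346545296637800254768 / 10 ^ 22), (2773372703536204483022 / 10 ^ 22), (14182653172567926272788 / 10 ^ 22), (10086185081973528096870 / 10 ^ 22), (3794599085495034996099 / 10 ^ 22)]
    ![![(-166237 / 10 ^ 6), (1818867 / 10 ^ 6), (13964 / 10 ^ 6), (54260 / 10 ^ 6), (149750 / 10 ^ 6)],
      ![(63615 / 10 ^ 6), (-559649 / 10 ^ 6), (-3601 / 10 ^ 6), (-8767 / 10 ^ 6), (-14509 / 10 ^ 6)],
      ![(16009 / 10 ^ 6), (128921 / 10 ^ 6), (8209 / 10 ^ 6), (1089 / 10 ^ 6), (-5249 / 10 ^ 6)],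
      ![(-38300 / 10 ^ 6), (140151 / 10 ^ 6), (1043 / 10 ^ 6), (-7185 / 10 ^ 6), (10523 / 10 ^ 6)],
      ![(-356158 / 10 ^ 6), (830399 / 10 ^ 6), (6753 / 10 ^ 6), (29745 / 10 ^ 6), (85492 / 10 ^ 6)]]
    (by
      intro i
      fin_cases i <;>
        simp only [Fin.isValue, Fin.zero_eta, Fin.mk_one, Fin.reduceFinMk, Matrix.cons_val, Matrix.cons_val_zero, Matrix.cons_val_one] <;>
        exact abs_le.2 ⟨by norm_num, by norm_num⟩)
    (by
      intro i k
      fin_cases i <;> fin_cases k <;>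
        simp only [Fin.isValue, Fin.zero_eta, Fin.mk_one, Fin.reduceFinMk, Matrix.cons_val, Matrix.cons_val_zero, Matrix.cons_val_one] <;>
        exact abs_le.2 ⟨by norm_num, by norm_num⟩)
    (by
      intro i
      fin_cases i <;> simp only [Fin.isValue, Fin.zero_eta, Fin.mk_one, Fin.reduceFinMk, Matrix.cons_val, Matrix.cons_val_zero, Matrix.cons_val_one, Fin.sum_univ_five, JJ, Fin.reduceEq, if_true, if_false] <;>
        norm_num [abs_of_nonneg, abs_of_nonpos])
    (by
      intro i
      fin_cases i <;> simp only [Fin.isValue, Fin.zero_eta, Fin.mk_one, Fin.reduceFinMk, Matrix.cons_val, Matrix.cons_val_zero, Matrix.cons_val_one, Fin.sum_univ_five, GG, g0, g1, g2, g3, g4] <;>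
        exact abs_le.2 ⟨by norm_num, by norm_num⟩)
  have h0 := abs_le.1 (hx 0)
  have h1 := abs_le.1 (hx 1)
  have h2 := abs_le.1 (hx 2)
  have h3 := abs_le.1 (hx 3)
  have h4 := abs_le.1 (hx 4)
  simp at h0 h1 h2 h3 h4
  refine ⟨x 0, x 1, x 2, x 3, x 4, ?_, ?_, ?_, ?_, ?_, ?_, ?_, ?_, ?_, ?_,
    hz 0, hz 1, hz 2, hz 3, hz 4⟩ <;> norm_num <;> linarith

lemma box2 : ∃ u0 u1 u2 x2 x3 : ℝ,
      0.33 < u0 ∧ u0 < 0.34 ∧ 0.236 < u1 ∧ u1 < 0.237 ∧ 0.36 < u2 ∧ u2 < 0.37 ∧ 0.312 < x2 ∧ x2 < 0.313 ∧ 1.0008 < x3 ∧ x3 < 1.0009 ∧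
      g0 u0 u1 u2 x2 x3 = 0 ∧ g1 u0 u1 u2 x2 x3 = 0 ∧ g2 u0 u1 u2 x2 x3 = 0 ∧ g3 u0 u1 u2 x2 x3 = 0 ∧ g4 u0 u1 u2 x2 x3 = 0 := by
  obtain ⟨x, hx, hz⟩ := main_exists ![(3344514994342263915421 / 10 ^ 22), (2369507620104134952975 / 10 ^ 22), (3697851300329043338936 / 10 ^ 22), (3124197568172779549967 / 10 ^ 22), (10008635928740143571398 / 10 ^ 22)]
    ![![(364897 / 10 ^ 6), (5638099 / 10 ^ 6), (37237 / 10 ^ 6), (51448 / 10 ^ 6), (-6079 / 10 ^ 6)],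
      ![(46570 / 10 ^ 6), (-4515179 / 10 ^ 6), (-47987 / 10 ^ 6), (-26526 / 10 ^ 6), (-2513 / 10 ^ 6)],
      ![(-166306 / 10 ^ 6), (7000567 / 10 ^ 6), (75327 / 10 ^ 6), (84931 / 10 ^ 6), (-5474 / 10 ^ 6)],
      ![(-57335 / 10 ^ 6), (2326393 / 10 ^ 6), (8582 / 10 ^ 6), (27387 / 10 ^ 6), (-4653 / 10 ^ 6)],
      ![(7973 / 10 ^ 6), (134951 / 10 ^ 6), (-155 / 10 ^ 6), (-22687 / 10 ^ 6), (-22898 / 10 ^ 6)]]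
    (by
      intro i
      fin_cases i <;>
        simp only [Fin.isValue, Fin.zero_eta, Fin.mk_one, Fin.reduceFinMk, Matrix.cons_val, Matrix.cons_val_zero, Matrix.cons_val_one] <;>
        exact abs_le.2 ⟨by norm_num, by norm_num⟩)
    (by
      intro i k
      fin_cases i <;> fin_cases k <;>
        simp only [Fin.isValue, Fin.zero_eta, Fin.mk_one, Fin.reduceFinMk, Matrix.cons_val, Matrix.cons_val_zero, Matrix.cons_val_one] <;>
        exact abs_le.2 ⟨by norm_num, by norm_num⟩)
    (by
      intro i
      fin_cases i <;> simp only [Fin.isValue, Fin.zero_eta, Fin.mk_one, Fin.reduceFinMk, Matrix.cons_val, Matrix.cons_val_zero, Matrix.cons_val_one, Fin.sum_univ_five, JJ, Fin.reduceEq, if_true, if_false] <;>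
        norm_num [abs_of_nonneg, abs_of_nonpos])
    (by
      intro i
      fin_cases i <;> simp only [Fin.isValue, Fin.zero_eta, Fin.mk_one, Fin.reduceFinMk, Matrix.cons_val, Matrix.cons_val_zero, Matrix.cons_val_one, Fin.sum_univ_five, GG, g0, g1, g2, g3, g4] <;>
        exact abs_le.2 ⟨by norm_num, by norm_num⟩)
  have h0 := abs_le.1 (hx 0)
  have h1 := abs_le.1 (hx 1)
  have h2 := abs_le.1 (hx 2)
  have h3 := abs_le.1 (hx 3)
  have h4 := abs_le.1 (hx 4)
  simp at h0 h1 h2 h3 h4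
  refine ⟨x 0, x 1, x 2, x 3, x 4, ?_, ?_, ?_, ?_, ?_, ?_, ?_, ?_, ?_, ?_,
    hz 0, hz 1, hz 2, hz 3, hz 4⟩ <;> norm_num <;> linarith

lemma box3 : ∃ u0 u1 u2 x2 x3 : ℝ,
      0.28 < u0 ∧ u0 < 0.29 ∧ 0.36 < u1 ∧ u1 < 0.37 ∧ 0.14 < u2 ∧ u2 < 0.15 ∧ 0.287 < x2 ∧ x2 < 0.288 ∧ 1.002 < x3 ∧ x3 < 1.003 ∧
      g0 u0 u1 u2 x2 x3 = 0 ∧ g1 u0 u1 u2 x2 x3 = 0 ∧ g2 u0 u1 u2 x2 x3 = 0 ∧ g3 u0 u1 u2 x2 x3 = 0 ∧ g4 u0 u1 u2 x2 x3 = 0 := by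
  obtain ⟨x, hx, hz⟩ := main_exists ![(2867993628719250605573 / 10 ^ 22), (3660576445956400559679 / 10 ^ 22), (1495878645138387052222 / 10 ^ 22), (2876346841556029099218 / 10 ^ 22), (10026184786165168389847 / 10 ^ 22)]
    ![![(298903 / 10 ^ 6), (-3000937 / 10 ^ 6), (-61591 / 10 ^ 6), (3305 / 10 ^ 6), (-5469 / 10 ^ 6)],
      ![(-39699 / 10 ^ 6), (-2159240 / 10 ^ 6), (444 / 10 ^ 6), (28075 / 10 ^ 6), (-5689 / 10 ^ 6)],
      ![(2768 / 10 ^ 6), (2370468 / 10 ^ 6), (-30303 / 10 ^ 6), (-3455 / 10 ^ 6), (-1628 / 10 ^ 6)],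
      ![(-6212 / 10 ^ 6), (-2984501 / 10 ^ 6), (-65267 / 10 ^ 6), (1657 / 10 ^ 6), (-4665 / 10 ^ 6)],
      ![(5499 / 10 ^ 6), (-274755 / 10 ^ 6), (-4431 / 10 ^ 6), (-24223 / 10 ^ 6), (-23620 / 10 ^ 6)]]
    (by
      intro i
      fin_cases i <;>
        simp only [Fin.isValue, Fin.zero_eta, Fin.mk_one, Fin.reduceFinMk, Matrix.cons_val, Matrix.cons_val_zero, Matrix.cons_val_one] <;>
        exact abs_le.2 ⟨by norm_num, by norm_num⟩)
    (by
      intro i k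
      fin_cases i <;> fin_cases k <;>
        simp only [Fin.isValue, Fin.zero_eta, Fin.mk_one, Fin.reduceFinMk, Matrix.cons_val, Matrix.cons_val_zero, Matrix.cons_val_one] <;>
        exact abs_le.2 ⟨by norm_num, by norm_num⟩)
    (by
      intro i
      fin_cases i <;> simp only [Fin.isValue, Fin.zero_eta, Fin.mk_one, Fin.reduceFinMk, Matrix.cons_val, Matrix.cons_val_zero, Matrix.cons_val_one, Fin.sum_univ_five, JJ, Fin.reduceEq, if_true, if_false] <;>
        norm_num [abs_of_nonneg, abs_of_nonpos])
    (by
      intro i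
      fin_cases i <;> simp only [Fin.isValue, Fin.zero_eta, Fin.mk_one, Fin.reduceFinMk, Matrix.cons_val, Matrix.cons_val_zero, Matrix.cons_val_one, Fin.sum_univ_five, GG, g0, g1, g2, g3, g4] <;>
        exact abs_le.2 ⟨by norm_num, by norm_num⟩)
  have h0 := abs_le.1 (hx 0)
  have h1 := abs_le.1 (hx 1)
  have h2 := abs_le.1 (hx 2)
  have h3 := abs_le.1 (hx 3)
  have h4 := abs_le.1 (hx 4)
  simp at h0 h1 h2 h3 h4
  refine ⟨x 0, x 1, x 2, x 3, x 4, ?_, ?_, ?_, ?_, ?_, ?_, ?_, ?_, ?_, ?_,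
    hz 0, hz 1, hz 2, hz 3, hz 4⟩ <;> norm_num <;> linarith

lemma box4 : ∃ u0 u1 u2 x2 x3 : ℝ,
      0.77 < u0 ∧ u0 < 0.78 ∧ 0.19 < u1 ∧ u1 < 0.20 ∧ 0.11 < u2 ∧ u2 < 0.12 ∧ 0.526 < x2 ∧ x2 < 0.527 ∧ 1.08 < x3 ∧ x3 < 1.09 ∧
      g0 u0 u1 u2 x2 x3 = 0 ∧ g1 u0 u1 u2 x2 x3 = 0 ∧ g2 u0 u1 u2 x2 x3 = 0 ∧ g3 u0 u1 u2 x2 x3 = 0 ∧ g4 u0 u1 u2 x2 x3 = 0 := by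
  obtain ⟨x, hx, hz⟩ := main_exists ![(7754170377204581517370 / 10 ^ 22), (1971574158238171930160 / 10 ^ 22), (1143726968566104261949 / 10 ^ 22), (5266635800793674852534 / 10 ^ 22), (10826429934996932485963 / 10 ^ 22)]
    ![![(339245 / 10 ^ 6), (4619755 / 10 ^ 6), (73630 / 10 ^ 6), (39894 / 10 ^ 6), (-3966 / 10 ^ 6)],
      ![(741 / 10 ^ 6), (-1325768 / 10 ^ 6), (-18999 / 10 ^ 6), (-640 / 10 ^ 6), (-950 / 10 ^ 6)],
      ![(347 / 10 ^ 6), (-32175 / 10 ^ 6), (-10163 / 10 ^ 6), (-329 / 10 ^ 6), (-537 / 10 ^ 6)],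
      ![(-34099 / 10 ^ 6), (375495 / 10 ^ 6), (8800 / 10 ^ 6), (19466 / 10 ^ 6), (-1785 / 10 ^ 6)],
      ![(-3274 / 10 ^ 6), (482484 / 10 ^ 6), (9645 / 10 ^ 6), (-7170 / 10 ^ 6), (-16514 / 10 ^ 6)]]
    (by
      intro i
      fin_cases i <;>
        simp only [Fin.isValue, Fin.zero_eta, Fin.mk_one, Fin.reduceFinMk, Matrix.cons_val, Matrix.cons_val_zero, Matrix.cons_val_one] <;>
        exact abs_le.2 ⟨by norm_num, by norm_num⟩)
    (by
      intro i k
      fin_cases i <;> fin_cases k <;>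
        simp only [Fin.isValue, Fin.zero_eta, Fin.mk_one, Fin.reduceFinMk, Matrix.cons_val, Matrix.cons_val_zero, Matrix.cons_val_one] <;>
        exact abs_le.2 ⟨by norm_num, by norm_num⟩)
    (by
      intro i
      fin_cases i <;> simp only [Fin.isValue, Fin.zero_eta, Fin.mk_one, Fin.reduceFinMk, Matrix.cons_val, Matrix.cons_val_zero, Matrix.cons_val_one, Fin.sum_univ_five, JJ, Fin.reduceEq, if_true, if_false] <;>
        norm_num [abs_of_nonneg, abs_of_nonpos])
    (by
      intro i
      fin_cases i <;> simp only [Fin.isValue, Fin.zero_eta, Fin.mk_one, Fin.reduceFinMk, Matrix.cons_val, Matrix.cons_val_zero, Matrix.cons_val_one, Fin.sum_univ_five, GG, g0, g1, g2, g3, g4] <;>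
        exact abs_le.2 ⟨by norm_num, by norm_num⟩)
  have h0 := abs_le.1 (hx 0)
  have h1 := abs_le.1 (hx 1)
  have h2 := abs_le.1 (hx 2)
  have h3 := abs_le.1 (hx 3)
  have h4 := abs_le.1 (hx 4)
  simp at h0 h1 h2 h3 h4
  refine ⟨x 0, x 1, x 2, x 3, x 4, ?_, ?_, ?_, ?_, ?_, ?_, ?_, ?_, ?_, ?_,
    hz 0, hz 1, hz 2, hz 3, hz 4⟩ <;> norm_num <;> linarith

lemma box5 : ∃ u0 u1 u2 x2 x3 : ℝ,
      1.58 < u0 ∧ u0 < 1.59 ∧ 0.30 < u1 ∧ u1 < 0.31 ∧ 1.32 < u2 ∧ u2 < 1.33 ∧ 1.23 < x2 ∧ x2 < 1.24 ∧ 1.35 < x3 ∧ x3 < 1.36 ∧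
      g0 u0 u1 u2 x2 x3 = 0 ∧ g1 u0 u1 u2 x2 x3 = 0 ∧ g2 u0 u1 u2 x2 x3 = 0 ∧ g3 u0 u1 u2 x2 x3 = 0 ∧ g4 u0 u1 u2 x2 x3 = 0 := by
  obtain ⟨x, hx, hz⟩ := main_exists ![(15820395823023500961014 / 10 ^ 22), (3062269159281476268149 / 10 ^ 22), (13221125013873047393309 / 10 ^ 22), (12303151390115052728471 / 10 ^ 22), (13552648054817321174082 / 10 ^ 22)]
    ![![(100862 / 10 ^ 6), (107960 / 10 ^ 6), (1699 / 10 ^ 6), (-14909 / 10 ^ 6), (-5867 / 10 ^ 6)],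
      ![(1281 / 10 ^ 6), (-20849 / 10 ^ 6), (-556 / 10 ^ 6), (-2092 / 10 ^ 6), (-578 / 10 ^ 6)],
      ![(-2405 / 10 ^ 6), (7188 / 10 ^ 6), (2011 / 10 ^ 6), (2473 / 10 ^ 6), (1030 / 10 ^ 6)],
      ![(4670 / 10 ^ 6), (17828 / 10 ^ 6), (1 / 10 ^ 6), (-10399 / 10 ^ 6), (-2370 / 10 ^ 6)],
      ![(11667 / 10 ^ 6), (35096 / 10 ^ 6), (-260 / 10 ^ 6), (-19441 / 10 ^ 6), (-9203 / 10 ^ 6)]]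
    (by
      intro i
      fin_cases i <;>
        simp only [Fin.isValue, Fin.zero_eta, Fin.mk_one, Fin.reduceFinMk, Matrix.cons_val, Matrix.cons_val_zero, Matrix.cons_val_one] <;>
        exact abs_le.2 ⟨by norm_num, by norm_num⟩)
    (by
      intro i k
      fin_cases i <;> fin_cases k <;>
        simp only [Fin.isValue, Fin.zero_eta, Fin.mk_one, Fin.reduceFinMk, Matrix.cons_val, Matrix.cons_val_zero, Matrix.cons_val_one] <;>
        exact abs_le.2 ⟨by norm_num, by norm_num⟩)
    (by
      intro i
      fin_cases i <;> simp only [Fin.isValue, Fin.zero_eta, Fin.mk_one, Fin.reduceFinMk, Matrix.cons_val, Matrix.cons_val_zero, Matrix.cons_val_one, Fin.sum_univ_five, JJ, Fin.reduceEq, if_true, if_false] <;>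
        norm_num [abs_of_nonneg, abs_of_nonpos])
    (by
      intro i
      fin_cases i <;> simp only [Fin.isValue, Fin.zero_eta, Fin.mk_one, Fin.reduceFinMk, Matrix.cons_val, Matrix.cons_val_zero, Matrix.cons_val_one, Fin.sum_univ_five, GG, g0, g1, g2, g3, g4] <;>
        exact abs_le.2 ⟨by norm_num, by norm_num⟩)
  have h0 := abs_le.1 (hx 0)
  have h1 := abs_le.1 (hx 1)
  have h2 := abs_le.1 (hx 2)
  have h3 := abs_le.1 (hx 3)
  have h4 := abs_le.1 (hx 4)
  simp at h0 h1 h2 h3 h4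
  refine ⟨x 0, x 1, x 2, x 3, x 4, ?_, ?_, ?_, ?_, ?_, ?_, ?_, ?_, ?_, ?_,
    hz 0, hz 1, hz 2, hz 3, hz 4⟩ <;> norm_num <;> linarith

lemma box6 : ∃ u0 u1 u2 x2 x3 : ℝ,
      2.38 < u0 ∧ u0 < 2.39 ∧ 0.30 < u1 ∧ u1 < 0.31 ∧ 0.17 < u2 ∧ u2 < 0.18 ∧ 1.62 < x2 ∧ x2 < 1.63 ∧ 2.22 < x3 ∧ x3 < 2.23 ∧
      g0 u0 u1 u2 x2 x3 = 0 ∧ g1 u0 u1 u2 x2 x3 = 0 ∧ g2 u0 u1 u2 x2 x3 = 0 ∧ g3 u0 u1 u2 x2 x3 = 0 ∧ g4 u0 u1 u2 x2 x3 = 0 := by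
  obtain ⟨x, hx, hz⟩ := main_exists ![(23846394856422790469600 / 10 ^ 22), (3025310272458215768469 / 10 ^ 22), (1701536234762554996622 / 10 ^ 22), (16249173112522479001557 / 10 ^ 22), (22246116269131180155395 / 10 ^ 22)]
    ![![(30261 / 10 ^ 6), (235835 / 10 ^ 6), (11045 / 10 ^ 6), (-2107 / 10 ^ 6), (-430 / 10 ^ 6)],
      ![(161 / 10 ^ 6), (-32444 / 10 ^ 6), (-1457 / 10 ^ 6), (-652 / 10 ^ 6), (-94 / 10 ^ 6)],
      ![(78 / 10 ^ 6), (597 / 10 ^ 6), (-700 / 10 ^ 6), (-320 / 10 ^ 6), (-47 / 10 ^ 6)],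
      ![(254 / 10 ^ 6), (37782 / 10 ^ 6), (1967 / 10 ^ 6), (-3530 / 10 ^ 6), (-384 / 10 ^ 6)],
      ![(573 / 10 ^ 6), (73435 / 10 ^ 6), (3875 / 10 ^ 6), (-6424 / 10 ^ 6), (-1759 / 10 ^ 6)]]
    (by
      intro i
      fin_cases i <;>
        simp only [Fin.isValue, Fin.zero_eta, Fin.mk_one, Fin.reduceFinMk, Matrix.cons_val, Matrix.cons_val_zero, Matrix.cons_val_one] <;>
        exact abs_le.2 ⟨by norm_num, by norm_num⟩)
    (by
      intro i k
      fin_cases i <;> fin_cases k <;>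
        simp only [Fin.isValue, Fin.zero_eta, Fin.mk_one, Fin.reduceFinMk, Matrix.cons_val, Matrix.cons_val_zero, Matrix.cons_val_one] <;>
        exact abs_le.2 ⟨by norm_num, by norm_num⟩)
    (by
      intro i
      fin_cases i <;> simp only [Fin.isValue, Fin.zero_eta, Fin.mk_one, Fin.reduceFinMk, Matrix.cons_val, Matrix.cons_val_zero, Matrix.cons_val_one, Fin.sum_univ_five, JJ, Fin.reduceEq, if_true, if_false] <;>
        norm_num [abs_of_nonneg, abs_of_nonpos])
    (by
      intro i
      fin_cases i <;> simp only [Fin.isValue, Fin.zero_eta, Fin.mk_one, Fin.reduceFinMk, Matrix.cons_val, Matrix.cons_val_zero, Matrix.cons_val_one, Fin.sum_univ_five, GG, g0, g1, g2, g3, g4] <;>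
        exact abs_le.2 ⟨by norm_num, by norm_num⟩)
  have h0 := abs_le.1 (hx 0)
  have h1 := abs_le.1 (hx 1)
  have h2 := abs_le.1 (hx 2)
  have h3 := abs_le.1 (hx 3)
  have h4 := abs_le.1 (hx 4)
  simp at h0 h1 h2 h3 h4
  refine ⟨x 0, x 1, x 2, x 3, x 4, ?_, ?_, ?_, ?_, ?_, ?_, ?_, ?_, ?_, ?_,
    hz 0, hz 1, hz 2, hz 3, hz 4⟩ <;> norm_num <;> linarith

theorem stmt14 :
    (∃ u0 u1 u2 x2 x3 : ℝ,
      0.30 < u0 ∧ u0 < 0.31 ∧ 0.23 < u1 ∧ u1 < 0.24 ∧ 0.11 < u2 ∧ u2 < 0.12 ∧ 1.003 < x2 ∧ x2 < 1.004 ∧ 0.278 < x3 ∧ x3 < 0.279 ∧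
      g0 u0 u1 u2 x2 x3 = 0 ∧ g1 u0 u1 u2 x2 x3 = 0 ∧ g2 u0 u1 u2 x2 x3 = 0 ∧ g3 u0 u1 u2 x2 x3 = 0 ∧ g4 u0 u1 u2 x2 x3 = 0) ∧
    (∃ u0 u1 u2 x2 x3 : ℝ,
      0.43 < u0 ∧ u0 < 0.44 ∧ 0.27 < u1 ∧ u1 < 0.28 ∧ 1.41 < u2 ∧ u2 < 1.42 ∧ 1.008 < x2 ∧ x2 < 1.009 ∧ 0.379 < x3 ∧ x3 < 0.380 ∧
      g0 u0 u1 u2 x2 x3 = 0 ∧ g1 u0 u1 u2 x2 x3 = 0 ∧ g2 u0 u1 u2 x2 x3 = 0 ∧ g3 u0 u1 u2 x2 x3 = 0 ∧ g4 u0 u1 u2 x2 x3 = 0) ∧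
    (∃ u0 u1 u2 x2 x3 : ℝ,
      0.33 < u0 ∧ u0 < 0.34 ∧ 0.236 < u1 ∧ u1 < 0.237 ∧ 0.36 < u2 ∧ u2 < 0.37 ∧ 0.312 < x2 ∧ x2 < 0.313 ∧ 1.0008 < x3 ∧ x3 < 1.0009 ∧
      g0 u0 u1 u2 x2 x3 = 0 ∧ g1 u0 u1 u2 x2 x3 = 0 ∧ g2 u0 u1 u2 x2 x3 = 0 ∧ g3 u0 u1 u2 x2 x3 = 0 ∧ g4 u0 u1 u2 x2 x3 = 0) ∧
    (∃ u0 u1 u2 x2 x3 : ℝ,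
      0.28 < u0 ∧ u0 < 0.29 ∧ 0.36 < u1 ∧ u1 < 0.37 ∧ 0.14 < u2 ∧ u2 < 0.15 ∧ 0.287 < x2 ∧ x2 < 0.288 ∧ 1.002 < x3 ∧ x3 < 1.003 ∧
      g0 u0 u1 u2 x2 x3 = 0 ∧ g1 u0 u1 u2 x2 x3 = 0 ∧ g2 u0 u1 u2 x2 x3 = 0 ∧ g3 u0 u1 u2 x2 x3 = 0 ∧ g4 u0 u1 u2 x2 x3 = 0) ∧
    (∃ u0 u1 u2 x2 x3 : ℝ,
      0.77 < u0 ∧ u0 < 0.78 ∧ 0.19 < u1 ∧ u1 < 0.20 ∧ 0.11 < u2 ∧ u2 < 0.12 ∧ 0.526 < x2 ∧ x2 < 0.527 ∧ 1.08 < x3 ∧ x3 < 1.09 ∧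
      g0 u0 u1 u2 x2 x3 = 0 ∧ g1 u0 u1 u2 x2 x3 = 0 ∧ g2 u0 u1 u2 x2 x3 = 0 ∧ g3 u0 u1 u2 x2 x3 = 0 ∧ g4 u0 u1 u2 x2 x3 = 0) ∧
    (∃ u0 u1 u2 x2 x3 : ℝ,
      1.58 < u0 ∧ u0 < 1.59 ∧ 0.30 < u1 ∧ u1 < 0.31 ∧ 1.32 < u2 ∧ u2 < 1.33 ∧ 1.23 < x2 ∧ x2 < 1.24 ∧ 1.35 < x3 ∧ x3 < 1.36 ∧
      g0 u0 u1 u2 x2 x3 = 0 ∧ g1 u0 u1 u2 x2 x3 = 0 ∧ g2 u0 u1 u2 x2 x3 = 0 ∧ g3 u0 u1 u2 x2 x3 = 0 ∧ g4 u0 u1 u2 x2 x3 = 0) ∧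
    (∃ u0 u1 u2 x2 x3 : ℝ,
      2.38 < u0 ∧ u0 < 2.39 ∧ 0.30 < u1 ∧ u1 < 0.31 ∧ 0.17 < u2 ∧ u2 < 0.18 ∧ 1.62 < x2 ∧ x2 < 1.63 ∧ 2.22 < x3 ∧ x3 < 2.23 ∧
      g0 u0 u1 u2 x2 x3 = 0 ∧ g1 u0 u1 u2 x2 x3 = 0 ∧ g2 u0 u1 u2 x2 x3 = 0 ∧ g3 u0 u1 u2 x2 x3 = 0 ∧ g4 u0 u1 u2 x2 x3 = 0) := by
  exact ⟨box0, box1, box2, box3, box4, box5, box6⟩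
end

section
/- For all real numbers x3 and u2 such that 5632*x3^3 - 9488*x3^2 + 3933*x3 - 477 = 0 and 1408*x3^2 - 1948*x3 + 53*u2 + 387 = 0, the quintuple (u0, u1, u2, x2, x3) with u0 = u1 = x3 and x2 = 1 satisfies g0 = g1 = g2 = g3 = g4 = 0. (These are naturally reductive Einstein solutions on E7(3) with u0 = u1 = x3 and x1 = x2.) -/
theorem stmt15 :
    ∀ x3 u2 : ℝ,
      5632 * x3 ^ 3 - 9488 * x3 ^ 2 + 3933 * x3 - 477 = 0 →
      1408 * x3 ^ 2 - 1948 * x3 + 53 * u2 + 387 = 0 →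
      (g0 x3 x3 u2 1 x3 = 0 ∧ g1 x3 x3 u2 1 x3 = 0 ∧ g2 x3 x3 u2 1 x3 = 0 ∧ g3 x3 x3 u2 1 x3 = 0 ∧ g4 x3 x3 u2 1 x3 = 0) := by
  intro x u h1 h2
  have q : 4*u*x + 32*x^2 - 45*x + 9 = 0 := by
    linear_combination (4*x/53)*h2 - (1/53)*h1
  have r : 28*u*x + 53*u^2 - 90*u + 9 = 0 := by
    linear_combination (u - 9)*h2 + (494 - 352*x)*q + 2*h1
  have s : 4*x^2*u + 2*u - 5*x*u^2 - x = 0 := by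
    linear_combination (1/53)*(-5*x*r + (88*x - 225/2)*q + 2*h2 - (1/2)*h1)
  unfold g0 g1 g2 g3 g4
  refine ⟨by ring, ?_, ?_, by ring, ?_⟩
  · linear_combination 3*x^2*s
  · linear_combination 5*x*r
  · linear_combination -5*x*q
end
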